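/- arXiv:1905.08229 — 2 statements merged into one kernel-verified Lean document; each statement's English description precedes it below -/
import Mathlib

section
/- Let A be a δ-ring and let I ⊆ A be a finitely generated ideal containing p. Then the classical I-adic completion Â = lim_n A/I^n carries a unique δ-structure δ̂ such that the canonical map A → Â commutes with the δ-structures (i.e., is a map of δ-rings). -/
/-!
If `J` is an ideal of a δ-ring with `p ∈ J`, then `δ (J ^ (n + 1)) ⊆ J ^ n`: this follows by
induction from the product rule, each of whose three terms picks up a factor in `J`. Combined with
the sum rule, `x ≡ y` modulo `J ^ (n + 1)` implies `δ x ≡ δ y` modulo `J ^ n`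
(`IsDeltaStructure.sub_mem_pow`), so `δ` is uniformly continuous for the `J`-adic topology.

For existence, apply this to `A` and `I`: `δ` sends Cauchy sequences to Cauchy sequences (after a
shift by one), hence extends to the completion, in such a way that the extension modulo `I ^ n` is
computed by `δ` on any representative modulo `I ^ (n + 1)`. The δ-axioms descend from `A`.

For uniqueness, apply it to a δ-structure on `Â` and `J = I Â`. As `I` is finitely generated, the
kernel of `Â → A / I ^ n` is `J ^ n`, so any compatible δ-structure on `Â` is again computed modulo
`I ^ n` by `δ` on representatives modulo `I ^ (n + 1)`.
-/

/-- `deltaE p x y` is the evaluation at `(x, y)` of the integer polynomial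
`(X^p + Y^p - (X+Y)^p)/p ∈ ℤ[X,Y]` (for `p` prime). -/
def deltaE (p : ℕ) {A : Type*} [CommRing A] (x y : A) : A :=
  - ∑ i ∈ Finset.Ioo 0 p, ((p.choose i / p : ℕ) : A) * x ^ i * y ^ (p - i)

/-- A δ-structure on a commutative ring `A` for the prime `p`. -/
structure IsDeltaStructure (p : ℕ) {A : Type*} [CommRing A] (δ : A → A) : Prop where
  map_zero : δ 0 = 0
  map_one : δ 1 = 0
  map_mul : ∀ x y : A, δ (x * y) = x ^ p * δ y + y ^ p * δ x + (p : A) * δ x * δ y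
  map_add : ∀ x y : A, δ (x + y) = δ x + δ y + deltaE p x y

theorem map_deltaE (p : ℕ) {A B : Type*} [CommRing A] [CommRing B] (f : A →+* B) (x y : A) :
    f (deltaE p x y) = deltaE p (f x) (f y) := by
  simp [deltaE, map_sum]

theorem deltaE_mem (p : ℕ) {A : Type*} [CommRing A] (J : Ideal A) {x : A} (hx : x ∈ J) (y : A) :
    deltaE p x y ∈ J := by
  refine J.neg_mem (J.sum_mem fun i hi => ?_)
  have hi0 : 0 < i := (Finset.mem_Ioo.1 hi).1
  exact J.mul_mem_right _ (J.mul_mem_left _ (J.pow_mem_of_mem hx i hi0))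

namespace IsDeltaStructure

variable {p : ℕ} {A : Type*} [CommRing A] {δ : A → A}

theorem mem_pow_of_mem_pow_succ (hp0 : 0 < p) (hδ : IsDeltaStructure p δ) {J : Ideal A}
    (hp : (p : A) ∈ J) (n : ℕ) : ∀ x ∈ J ^ (n + 1), δ x ∈ J ^ n := by
  induction n with
  | zero => simp
  | succ n ih =>
    intro x hx
    rw [pow_succ' J (n + 1)] at hx
    -- Membership of `x` itself is carried along: the sum rule needs it to control `deltaE`.
    have key : x ∈ J ^ (n + 1) ∧ δ x ∈ J ^ (n + 1) := by
      refine Submodule.mul_induction_on hx (fun y hy z hz => ?_) (fun y z hy hz => ?_)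
      · refine ⟨Ideal.mul_mem_left _ _ hz, ?_⟩
        rw [hδ.map_mul]
        have h1 : y ^ p * δ z ∈ J ^ (n + 1) := by
          rw [pow_succ']
          exact Ideal.mul_mem_mul (J.pow_mem_of_mem hy p hp0) (ih z hz)
        have h2 : z ^ p * δ y ∈ J ^ (n + 1) :=
          Ideal.mul_mem_right _ _ (Ideal.pow_mem_of_mem _ hz p hp0)
        have h3 : (p : A) * δ y * δ z ∈ J ^ (n + 1) := by
          rw [pow_succ']
          exact Ideal.mul_mem_mul (J.mul_mem_right _ hp) (ih z hz)
        exact add_mem (add_mem h1 h2) h3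
      · refine ⟨add_mem hy.1 hz.1, ?_⟩
        rw [hδ.map_add]
        exact add_mem (add_mem hy.2 hz.2) (deltaE_mem p _ hy.1 z)
    exact key.2

theorem sub_mem_pow (hp0 : 0 < p) (hδ : IsDeltaStructure p δ) {J : Ideal A}
    (hp : (p : A) ∈ J) {n : ℕ} {x y : A} (h : x - y ∈ J ^ (n + 1)) : δ x - δ y ∈ J ^ n := by
  have e : δ x - δ y = δ (x - y) + deltaE p (x - y) y := by
    have := hδ.map_add (x - y) y
    rw [sub_add_cancel] at this
    rw [this]; ring
  rw [e]
  exact add_mem (hδ.mem_pow_of_mem_pow_succ hp0 hp n _ h)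
    (Ideal.pow_le_pow_right n.le_succ (deltaE_mem p _ h y))

end IsDeltaStructure

open AdicCompletion in
/-- The extension of `δ` to the completion exists, characterised by its reductions. -/
theorem exists_delta_extension {p : ℕ} (hp0 : 0 < p) {A : Type*} [CommRing A] {δ : A → A}
    (hδ : IsDeltaStructure p δ) {I : Ideal A} (hp : (p : A) ∈ I) :
    ∃ d : AdicCompletion I A → AdicCompletion I A, ∀ (n : ℕ) (x : AdicCompletion I A) (a : A),
      evalₐ I (n + 1) x = Ideal.Quotient.mk _ a →
        evalₐ I n (d x) = Ideal.Quotient.mk _ (δ a) := by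
  have H : ∀ x : AdicCompletion I A, ∃ y : AdicCompletion I A, ∀ (n : ℕ) (a : A),
      evalₐ I (n + 1) x = Ideal.Quotient.mk _ a →
        evalₐ I n y = Ideal.Quotient.mk _ (δ a) := by
    intro x
    obtain ⟨f, rfl⟩ := mk_surjective I A x
    refine ⟨mk I A (AdicCauchySequence.mk I A (fun n => δ (f (n + 1))) fun n => ?_),
      fun n a h => ?_⟩
    · have hf := f.2 (Nat.le_succ (n + 1))
      rw [SModEq.sub_mem, smul_eq_mul, Ideal.mul_top] at hf ⊢
      exact hδ.sub_mem_pow hp0 hp hf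
    · rw [evalₐ_mk, Ideal.Quotient.eq] at h ⊢
      exact hδ.sub_mem_pow hp0 hp h
  choose d hd using H
  exact ⟨d, fun n x a => hd x n a⟩

open AdicCompletion in
/-- As `I` is finitely generated, a compatible δ-structure on the completion is determined modulo
`I ^ n` by `δ` on representatives modulo `I ^ (n + 1)`. -/
theorem evalₐ_delta_of_compatible {p : ℕ} (hp0 : 0 < p) {A : Type*} [CommRing A] {δ : A → A}
    {I : Ideal A} (hfg : I.FG) (hp : (p : A) ∈ I)
    {d : AdicCompletion I A → AdicCompletion I A} (hd : IsDeltaStructure p d)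
    (hc : ∀ a : A, d (algebraMap A _ a) = algebraMap A _ (δ a))
    (n : ℕ) (x : AdicCompletion I A) (a : A) (h : evalₐ I (n + 1) x = Ideal.Quotient.mk _ a) :
    evalₐ I n (d x) = Ideal.Quotient.mk _ (δ a) := by
  -- Kernels of the projections are the powers of the extended ideal.
  have ker_iff : ∀ (m : ℕ) (z : AdicCompletion I A),
      evalₐ I m z = 0 ↔ z ∈ (I.map (algebraMap A (AdicCompletion I A))) ^ m := by
    intro m z
    have h1 : z ∈ (I ^ m • ⊤ : Submodule A (AdicCompletion I A)) ↔ eval I A m z = 0 := by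
      rw [pow_smul_top_eq_ker_eval hfg, LinearMap.mem_ker]
    rw [Ideal.smul_top_eq_map, Submodule.restrictScalars_mem, Ideal.map_pow] at h1
    rw [h1]
    obtain ⟨f, rfl⟩ := mk_surjective I A z
    rw [evalₐ_mk, Ideal.Quotient.eq_zero_iff_mem]
    change _ ↔ Submodule.Quotient.mk (f m) = 0
    rw [Submodule.Quotient.mk_eq_zero, smul_eq_mul, Ideal.mul_top]
  have hp' : (p : AdicCompletion I A) ∈ I.map (algebraMap A (AdicCompletion I A)) := by
    simpa using Ideal.mem_map_of_mem (algebraMap A (AdicCompletion I A)) hp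
  have hx : x - algebraMap A _ a ∈ (I.map (algebraMap A (AdicCompletion I A))) ^ (n + 1) := by
    rw [← ker_iff, map_sub, h, AlgHom.commutes, Ideal.Quotient.algebraMap_eq, sub_self]
  have := (ker_iff n _).2 (hd.sub_mem_pow hp0 hp' hx)
  rwa [hc, map_sub, AlgHom.commutes, Ideal.Quotient.algebraMap_eq, sub_eq_zero] at this

/-- Let `A` be a δ-ring and `I ⊆ A` a finitely generated ideal containing `p`. Then the
classical `I`-adic completion `Â = lim_n A/I^n` carries a unique δ-structure making the
canonical map `A → Â` a map of δ-rings. -/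
theorem stmt6 (p : ℕ) [Fact p.Prime] {A : Type*} [CommRing A] (δ : A → A)
    (hδ : IsDeltaStructure p δ) (I : Ideal A) (hfg : I.FG) (hp : (p : A) ∈ I) :
    ∃! δhat : AdicCompletion I A → AdicCompletion I A,
      IsDeltaStructure p δhat ∧
      ∀ a : A, δhat (algebraMap A (AdicCompletion I A) a) =
        algebraMap A (AdicCompletion I A) (δ a) := by
  have hp0 : 0 < p := (Fact.out : p.Prime).pos
  obtain ⟨d, hd⟩ := exists_delta_extension hp0 hδ hp
  have hrep : ∀ (n : ℕ) (x : AdicCompletion I A),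
      ∃ a : A, AdicCompletion.evalₐ I n x = Ideal.Quotient.mk _ a := fun n x =>
    (Ideal.Quotient.mk_surjective _).imp fun _ h => h.symm
  -- A representative modulo `I ^ (n + 1)` is also one modulo `I ^ n`.
  have hdown : ∀ (n : ℕ) (x : AdicCompletion I A) (a : A),
      AdicCompletion.evalₐ I (n + 1) x = Ideal.Quotient.mk _ a →
        AdicCompletion.evalₐ I n x = Ideal.Quotient.mk _ a := by
    intro n x a h
    obtain ⟨f, rfl⟩ := AdicCompletion.mk_surjective I A x
    have hf := f.2 (Nat.le_succ n)
    rw [SModEq.sub_mem, smul_eq_mul, Ideal.mul_top] at hf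
    rw [AdicCompletion.evalₐ_mk, Ideal.Quotient.eq] at h ⊢
    simpa using add_mem hf (Ideal.pow_le_pow_right n.le_succ h)
  have hcomp : ∀ a : A, d (algebraMap A (AdicCompletion I A) a) =
      algebraMap A (AdicCompletion I A) (δ a) := fun a =>
    AdicCompletion.ext_evalₐ fun n => by
      rw [hd n _ a (by rw [AlgHom.commutes, Ideal.Quotient.algebraMap_eq]),
        AlgHom.commutes, Ideal.Quotient.algebraMap_eq]
  refine ⟨d, ⟨⟨?_, ?_, fun x y => ?_, fun x y => ?_⟩, hcomp⟩, fun d' hd' => ?_⟩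
  · simpa [hδ.map_zero] using hcomp 0
  · simpa [hδ.map_one] using hcomp 1
  · refine AdicCompletion.ext_evalₐ fun n => ?_
    obtain ⟨a, ha⟩ := hrep (n + 1) x
    obtain ⟨b, hb⟩ := hrep (n + 1) y
    rw [hd n (x * y) (a * b) (by rw [map_mul, ha, hb, map_mul]), hδ.map_mul]
    simp only [map_add, map_mul, map_pow, map_natCast, hd n x a ha, hd n y b hb,
      hdown n x a ha, hdown n y b hb]
  · refine AdicCompletion.ext_evalₐ fun n => ?_
    obtain ⟨a, ha⟩ := hrep (n + 1) x
    obtain ⟨b, hb⟩ := hrep (n + 1) y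
    have hE : AdicCompletion.evalₐ I n (deltaE p x y) =
        Ideal.Quotient.mk _ (deltaE p a b) := by
      rw [map_deltaE, ← hdown n x a ha, ← hdown n y b hb]
      exact map_deltaE p (AdicCompletion.evalₐ I n).toRingHom x y
    rw [hd n (x + y) (a + b) (by rw [map_add, ha, hb, map_add]), hδ.map_add]
    simp only [map_add, hd n x a ha, hd n y b hb, hE]
  · funext x
    refine AdicCompletion.ext_evalₐ fun n => ?_
    obtain ⟨a, ha⟩ := hrep (n + 1) x
    rw [hd n x a ha, evalₐ_delta_of_compatible hp0 hfg hp hd'.1 hd'.2 n x a ha]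
end

section
/- Let A be a δ-ring. Then for every x ∈ A with p·x = 0 one has φ(x) = x^p + p·δ(x) = 0. Consequently, if the Frobenius lift φ is injective, then A is p-torsionfree: p·x = 0 implies x = 0. -/
theorem natCast_mul_deltaE (p : ℕ) [hp : Fact p.Prime] {A : Type*} [CommRing A] (x y : A) :
    (p : A) * deltaE p x y = x ^ p + y ^ p - (x + y) ^ p := by
  have hpos : 0 < p := hp.out.pos
  have hr : Finset.range p = insert 0 (Finset.Ioo 0 p) := by
    ext i
    simp only [Finset.mem_range, Finset.mem_insert, Finset.mem_Ioo]
    omega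
  rw [add_pow, Finset.sum_range_succ, hr, Finset.sum_insert (by simp), deltaE, mul_neg,
    Finset.mul_sum]
  have key : ∀ i ∈ Finset.Ioo 0 p, (p : A) * (((p.choose i / p : ℕ) : A) * x ^ i * y ^ (p - i))
      = x ^ i * y ^ (p - i) * (p.choose i : A) := by
    intro i hi
    rw [Finset.mem_Ioo] at hi
    have h : p * (p.choose i / p) = p.choose i :=
      Nat.mul_div_cancel' (hp.out.dvd_choose_self hi.1.ne' hi.2)
    have h' : (p : A) * ((p.choose i / p : ℕ) : A) = (p.choose i : A) := by
      rw [← Nat.cast_mul, h]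
    rw [← h']
    ring
  rw [Finset.sum_congr rfl key]
  simp
  ring

/-- On natural numbers, `δ` is given by the Fermat quotient `(n - n ^ p) / p` computed in `ℤ`. -/
theorem IsDeltaStructure.exists_int_natCast {p : ℕ} [hp : Fact p.Prime] {A : Type*} [CommRing A]
    {δ : A → A} (hδ : IsDeltaStructure p δ) (n : ℕ) :
    ∃ d : ℤ, δ (n : A) = (d : A) ∧ (p : ℤ) * d = n - (n : ℤ) ^ p := by
  induction n with
  | zero => exact ⟨0, by simp [hδ.map_zero], by simp [hp.out.ne_zero]⟩
  | succ n ih =>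
    obtain ⟨d, hd, hpd⟩ := ih
    refine ⟨d + deltaE p (n : ℤ) 1, ?_, ?_⟩
    · rw [Nat.cast_succ, hδ.map_add, hδ.map_one, hd]
      simp [deltaE, -Nat.cast_div, -Nat.cast_div_charZero, -Int.natCast_ediv]
    · rw [mul_add, hpd, natCast_mul_deltaE]
      push_cast
      ring

theorem IsDeltaStructure.map_prime {p : ℕ} [hp : Fact p.Prime] {A : Type*} [CommRing A]
    {δ : A → A} (hδ : IsDeltaStructure p δ) : δ (p : A) = 1 - (p : A) ^ (p - 1) := by
  obtain ⟨d, hd, hpd⟩ := hδ.exists_int_natCast p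
  have hp0 : (p : ℤ) ≠ 0 := by exact_mod_cast hp.out.ne_zero
  have h : d = 1 - (p : ℤ) ^ (p - 1) := by
    apply mul_left_cancel₀ hp0
    rw [hpd, mul_sub, mul_one, mul_pow_sub_one hp.out.ne_zero]
  rw [hd, h]
  push_cast
  rfl

/-- In a δ-ring `A`, the Frobenius lift `φ(x) = x^p + p·δ(x)` kills any `p`-torsion
element; consequently, if `φ` is injective then `A` is `p`-torsionfree. -/
theorem stmt10 (p : ℕ) [Fact p.Prime] {A : Type*} [CommRing A] (δ : A → A)
    (hδ : IsDeltaStructure p δ) :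
    (∀ x : A, (p : A) * x = 0 → x ^ p + (p : A) * δ x = 0) ∧
    (Function.Injective (fun x : A => x ^ p + (p : A) * δ x) →
      ∀ x : A, (p : A) * x = 0 → x = 0) := by
  have hp : p.Prime := Fact.out
  have main : ∀ x : A, (p : A) * x = 0 → x ^ p + (p : A) * δ x = 0 := by
    intro x hx
    have h := hδ.map_mul (p : A) x
    rw [hx, hδ.map_zero, hδ.map_prime] at h
    have h1 : (p : A) * (p : A) ^ (p - 1) = (p : A) ^ p := mul_pow_sub_one hp.ne_zero _
    have h2 : (p : A) ^ (p - 1) * x ^ p = 0 := by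
      rw [← mul_pow_sub_one hp.ne_zero x, mul_left_comm, ← mul_pow, hx,
        zero_pow (Nat.sub_ne_zero_of_lt hp.one_lt), mul_zero]
    linear_combination -h + h2 + δ x * h1
  refine ⟨main, fun hinj x hx => hinj ?_⟩
  simp [main x hx, hδ.map_zero, hp.ne_zero]
end
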